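/- arXiv:1309.3526 — 2 statements merged into one kernel-verified Lean document; each statement's English description precedes it below -/
import Mathlib

section
/- Let M = M_n(ℂ) be the C*-algebra of n×n complex matrices (n ≥ 1) and let ψ ∈ M* satisfy ψ* = -ψ. Then the map x ↦ D_ψ(x*) from M to M* is an inner triple derivation, i.e., there exist finitely many b_j ∈ M and φ_j ∈ M* such that D_ψ∘* = Σ_j (L(b_j,φ_j) - L(φ_j,b_j)). -/
noncomputable section

/-- The C*-algebra of `n×n` complex matrices (with conjugate-transpose involution). -/
abbrev Mat (n : ℕ) := Matrix (Fin n) (Fin n) ℂ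

variable {n : ℕ}

/-- The triple product `{a,b,c} = (a b* c + c b* a)/2`. -/
def tp (a b c : Mat n) : Mat n := (2 : ℂ)⁻¹ • (a * star b * c + c * star b * a)

/-- The module triple product `{a,b,φ} = {φ,b,a}`, given by `x ↦ φ({b,a,x})`. -/
def tOut (a b : Mat n) (φ : Mat n → ℂ) : Mat n → ℂ := fun x => φ (tp b a x)

/-- The module triple product `{a,φ,b}`, given by `x ↦ conj (φ ({a,x,b}))`. -/
def tMid (a : Mat n) (φ : Mat n → ℂ) (b : Mat n) : Mat n → ℂ :=
  fun x => starRingEnd ℂ (φ (tp a x b))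

/-- The adjoint functional `φ*(x) = conj (φ (x*))`. -/
def fstar (φ : Mat n → ℂ) : Mat n → ℂ := fun x => starRingEnd ℂ (φ (star x))

/-- The inner binary derivation `D_ψ(x) = ψ·x - x·ψ`, so `D_ψ(x)(y) = ψ(x y - y x)`. -/
def Dd (ψ : Mat n → ℂ) (x : Mat n) : Mat n → ℂ := fun y => ψ (x * y - y * x)

/-- The functional `z ↦ tr (p z)`. -/
def trF (p : Mat n) : Module.Dual ℂ (Mat n) :=
  (Matrix.traceLinearMap (Fin n) ℂ ℂ) ∘ₗ (LinearMap.mulLeft ℂ p)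

lemma trF_apply (p z : Mat n) : trF p z = (p * z).trace := rfl

lemma exists_trF (ψ : Module.Dual ℂ (Mat n)) : ∃ K : Mat n, ψ = trF K := by
  refine ⟨Matrix.of fun i j => ψ (Matrix.single j i 1), ?_⟩
  apply Matrix.ext_linearMap
  intro i j
  ext
  simp [trF_apply, Matrix.trace_mul_single]

lemma term_eq (p b x y : Mat n) :
    tMid b (trF p) x y - tOut x b (trF p) y
      = (2 : ℂ)⁻¹ * ((star (p * b) - p * b) * (star x * y)).trace
        + (2 : ℂ)⁻¹ * ((star (b * p) - b * p) * (y * star x)).trace := by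
  have h1 : tMid b (trF p) x y
      = (2 : ℂ)⁻¹ * ((star (p * b) * (star x * y)).trace
        + (star (b * p) * (y * star x)).trace) := by
    simp only [tMid, tp, map_smul, map_add, trF_apply, smul_eq_mul, map_mul]
    have e : ∀ z : Mat n, starRingEnd ℂ z.trace = (star z).trace := fun z => by
      rw [Matrix.star_eq_conjTranspose, Matrix.trace_conjTranspose]; rfl
    simp only [e, star_mul, star_star, mul_assoc]
    have e1 : (star x * (y * (star b * star p))).trace
        = (star b * (star p * (star x * y))).trace := by
      rw [← mul_assoc, Matrix.trace_mul_comm]; simp only [mul_assoc]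
    have e2 : (star b * (y * (star x * star p))).trace
        = (star p * (star b * (y * star x))).trace := by
      rw [Matrix.trace_mul_comm (star p)]; simp only [mul_assoc]
    rw [e1, e2]
    simp only [map_inv₀, map_ofNat]
  have h2 : tOut x b (trF p) y
      = (2 : ℂ)⁻¹ * ((p * b * (star x * y)).trace + (b * p * (y * star x)).trace) := by
    simp only [tOut, tp, map_smul, map_add, trF_apply, smul_eq_mul, mul_assoc]
    rw [Matrix.trace_mul_comm b]
    simp only [mul_assoc]
  rw [h1, h2]
  simp only [sub_mul, Matrix.trace_sub]
  ring

lemma sum_sandwich (k : Mat n) :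
    ∑ q : Fin n × Fin n, Matrix.single q.1 q.2 (1 : ℂ) * (k * Matrix.single q.2 q.1 1)
      = k.trace • (1 : Mat n) := by
  have e : ∀ q : Fin n × Fin n,
      Matrix.single q.1 q.2 (1 : ℂ) * (k * Matrix.single q.2 q.1 1)
        = Matrix.single q.1 q.1 (k q.2 q.2) := by
    intro q
    rw [← mul_assoc, Matrix.single_mul_mul_single]
    simp
  simp only [e, Fintype.sum_prod_type]
  ext a b
  simp only [Matrix.sum_apply, Matrix.single_apply, Matrix.smul_apply, Matrix.one_apply,
    Matrix.trace, Matrix.diag]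
  by_cases h : a = b
  · subst h; simp
  · simp [h]
    refine Finset.sum_eq_zero fun i _ => ?_
    rw [if_neg]; rintro ⟨rfl, rfl⟩; exact h rfl

lemma sum_right (k : Mat n) :
    ∑ q : Fin n × Fin n, k * Matrix.single q.2 q.1 1 * Matrix.single q.1 q.2 (1 : ℂ)
      = (n : ℂ) • k := by
  have e : ∀ q : Fin n × Fin n,
      k * Matrix.single q.2 q.1 1 * Matrix.single q.1 q.2 (1 : ℂ)
        = k * Matrix.single q.2 q.2 1 := by
    intro q
    rw [mul_assoc, Matrix.single_mul_single_same]; simp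
  simp only [e, Fintype.sum_prod_type, ← Finset.mul_sum]
  have : (∑ j : Fin n, Matrix.single j j (1 : ℂ)) = 1 := by
    exact Matrix.sum_single_one
  simp only [this, Finset.sum_const, Finset.card_univ, Fintype.card_fin]
  rw [mul_smul_comm, mul_one, Nat.cast_smul_eq_nsmul]

lemma reduce {ι : Type} [Fintype ι] (k : Mat n) (p b : ι → Mat n)
    (hk : star k = -k) (h1 : ∑ i, p i * b i = -k) (h2 : ∑ i, b i * p i = k) (x y : Mat n) :
    ∑ i, (tMid (b i) (trF (p i)) x y - tOut x (b i) (trF (p i)) y)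
      = (k * (star x * y - y * star x)).trace := by
  simp only [term_eq, Finset.sum_add_distrib, ← Finset.mul_sum, ← Matrix.trace_sum,
    ← Finset.sum_mul, Finset.sum_sub_distrib, ← star_sum, h1, h2, star_neg, hk]
  simp only [mul_sub, sub_mul, neg_mul, Matrix.trace_sub, Matrix.trace_neg]
  ring

lemma exists_family (hn : 1 ≤ n) (k : Mat n) (hk : k.trace = 0) :
    ∃ p b : (Fin n × Fin n) ⊕ (Fin n × Fin n) → Mat n,
      ∑ i, p i * b i = -k ∧ ∑ i, b i * p i = k := by
  have hn' : (n : ℂ) ≠ 0 := by exact_mod_cast (by omega : n ≠ 0)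
  refine ⟨Sum.elim (fun q => Matrix.single q.1 q.2 1)
      (fun q => (-(n : ℂ)⁻¹) • (k * Matrix.single q.2 q.1 1)),
    Sum.elim (fun q => ((n : ℂ)⁻¹) • (k * Matrix.single q.2 q.1 1))
      (fun q => Matrix.single q.1 q.2 1), ?_, ?_⟩
  all_goals
    simp only [Fintype.sum_sum_type, Sum.elim_inl, Sum.elim_inr, Matrix.smul_mul,
      Matrix.mul_smul, ← Finset.smul_sum, sum_sandwich, sum_right, hk, smul_smul]
    simp [hn']

/-- For `M = M_n(ℂ)` and `ψ ∈ M*` with `ψ* = -ψ`, the map `x ↦ D_ψ(x*)` is an inner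
triple derivation: `D_ψ∘* = Σ_j (L(b_j,φ_j) - L(φ_j,b_j))` for some `b_j ∈ M`,
`φ_j ∈ M*`. -/
theorem matrix_skew_inner_derivation_is_inner_triple (n : ℕ) (hn : 1 ≤ n)
    (ψ : Module.Dual ℂ (Mat n)) (hψ : fstar ⇑ψ = -⇑ψ) :
    ∃ (m : ℕ) (bs : Fin m → Mat n) (φs : Fin m → Module.Dual ℂ (Mat n)),
      ∀ x : Mat n,
        Dd ⇑ψ (star x) = ∑ i, (tMid (bs i) ⇑(φs i) x - tOut x (bs i) ⇑(φs i)) := by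
  have hn' : (n : ℂ) ≠ 0 := by exact_mod_cast (by omega : n ≠ 0)
  obtain ⟨K, rfl⟩ := exists_trF ψ
  have hK : star K = -K := by
    ext i j
    have := congrFun hψ (Matrix.single i j 1)
    have := congrFun hψ (Matrix.single j i 1)
    simp only [fstar, trF_apply, Matrix.star_eq_conjTranspose, Matrix.conjTranspose_single,
      Pi.neg_apply, Matrix.trace_mul_single] at this
    simpa [Matrix.star_apply] using this
  set c : ℂ := (n : ℂ)⁻¹ * K.trace with hc
  have hcs : star c = -c := by
    have : star K.trace = - K.trace := by
      rw [← Matrix.trace_conjTranspose, ← Matrix.star_eq_conjTranspose, hK, Matrix.trace_neg]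
    rw [hc, star_mul', this]
    simp
  obtain ⟨p, b, h1, h2⟩ := exists_family hn (K - c • 1) (by
    simp [Matrix.trace_sub, Matrix.trace_smul, hc]; field_simp; simp)
  let e := Fintype.equivFin ((Fin n × Fin n) ⊕ (Fin n × Fin n))
  refine ⟨_, fun i => b (e.symm i), fun i => trF (p (e.symm i)), fun x => ?_⟩
  ext y
  rw [Equiv.sum_comp e.symm (fun i => tMid (b i) (trF (p i)) x - tOut x (b i) (trF (p i)))]
  simp only [Finset.sum_apply, Pi.sub_apply]
  rw [reduce (K - c • 1) p b (by rw [star_sub, star_smul, hK, hcs, star_one]; simp; abel) h1 h2]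
  simp only [Dd, trF_apply, sub_mul, Matrix.trace_sub, Matrix.smul_mul, one_mul,
    Matrix.trace_smul]
  rw [Matrix.trace_mul_comm (star x) y]
  simp
end
end

section
/- Let M = M_n(ℂ) be the C*-algebra of n×n complex matrices (n ≥ 1). Then M is normally ternary weakly amenable: every conjugate-linear map δ : M → M* satisfying the triple derivation identity δ({x,y,z}) = {δ(x),y,z} + {x,δ(y),z} + {x,y,δ(z)} for all x, y, z ∈ M is an inner triple derivation, i.e., a finite sum of maps of the form L(b,φ) - L(φ,b) with b ∈ M, φ ∈ M*. -/
noncomputable section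

variable {n : ℕ}

open Matrix

/-- matrix units -/
def eu (n : ℕ) (p : Fin n × Fin n) : Mat n := Matrix.single p.1 p.2 1
def ev (n : ℕ) (p : Fin n × Fin n) : Mat n := Matrix.single p.2 p.1 1

lemma star_eu (n : ℕ) (p : Fin n × Fin n) : (eu n p)ᴴ = ev n p := by
  simp [eu, ev, Matrix.conjTranspose_single]

lemma star_ev (n : ℕ) (p : Fin n × Fin n) : (ev n p)ᴴ = eu n p := by
  simp [eu, ev, Matrix.conjTranspose_single]

lemma sum_eu_ev (n : ℕ) (w : Mat n) : ∑ p, eu n p * w * ev n p = w.trace • (1 : Mat n) := by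
  ext a b
  simp only [eu, ev, Matrix.sum_apply, Fintype.sum_prod_type, Matrix.mul_apply, Matrix.single_apply,
    Matrix.smul_apply, Matrix.trace, Matrix.one_apply, Matrix.diag]
  by_cases h : a = b
  · simp [h, ite_and]
  · simp [h, Ne.symm h, ite_and]

lemma sum_ev_eu (n : ℕ) (w : Mat n) : ∑ p, ev n p * w * eu n p = w.trace • (1 : Mat n) := by
  rw [← sum_eu_ev, Fintype.sum_prod_type, Fintype.sum_prod_type, Finset.sum_comm]
  rfl

lemma sum_eu_ev_one (n : ℕ) : ∑ p, eu n p * ev n p = (n : ℂ) • (1 : Mat n) := by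
  simpa using sum_eu_ev n 1

lemma sum_ev_eu_one (n : ℕ) : ∑ p, ev n p * eu n p = (n : ℂ) • (1 : Mat n) := by
  simpa using sum_ev_eu n 1

lemma mul_eu (n : ℕ) (x : Mat n) (i j : Fin n) : x * eu n (i, j) = ∑ k, x k i • eu n (k, j) := by
  ext a b
  simp [eu, Matrix.mul_apply, Matrix.sum_apply, Matrix.single_apply, ite_and]

lemma ev_mul (n : ℕ) (x : Mat n) (i j : Fin n) : ev n (i, j) * x = ∑ k, x i k • ev n (k, j) := by
  ext a b
  simp [ev, Matrix.mul_apply, Matrix.sum_apply, Matrix.single_apply, ite_and]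

lemma sum_shift (n : ℕ) (f : Mat n →ₗ[ℂ] Mat n) (x : Mat n) :
    ∑ p, f (x * eu n p) * ev n p = (∑ p, f (eu n p) * ev n p) * x := by
  simp only [Fintype.sum_prod_type, mul_eu, Finset.sum_mul, mul_assoc, ev_mul, map_sum, map_smul,
    Finset.mul_sum, Matrix.mul_smul, Matrix.smul_mul]
  rw [Finset.sum_comm]
  conv_rhs => rw [Finset.sum_comm]
  refine Finset.sum_congr rfl fun j _ => ?_
  rw [Finset.sum_comm]

lemma prime_mat {n : ℕ} {A B : Mat n} (h : ∀ w : Mat n, A * w * B = 0) : A = 0 ∨ B = 0 := by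
  by_contra! hc
  obtain ⟨hA, hB⟩ := hc
  apply hA
  ext k i
  by_contra hk
  apply hB
  ext j l
  have := congrFun (congrFun (h (eu n (i, j))) k) l
  simp [eu, Matrix.mul_apply, Matrix.single_apply, ite_and] at this
  exact this.resolve_left hk

/-- Almost derivations are derivations. -/
lemma cocycle_zero {n : ℕ} (T P : Mat n → Mat n) 
    (h : ∀ z w, T (z * w) = T z * w + z * T w + (P w * z - z * P w)) (w z : Mat n) :
    P w * z - z * P w = 0 := by
  have h1 : ∀ x y z, P (y * z) * x - x * P (y * z) =
      (P z * x - x * P z) * y + (P y * x - x * P y) * z := by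
    intro x y z
    have e1 := h (x * y) z
    have e2 := h x (y * z)
    rw [h x y] at e1
    rw [h y z] at e2
    rw [← mul_assoc, e1] at e2
    linear_combination (norm := noncomm_ring) -e2
  have h2 : ∀ x x' y z, (P z * x - x * P z) * (x' * y - y * x') +
      (P y * x - x * P y) * (x' * z - z * x') = 0 := by
    intro x x' y z
    have e := h1 (x * x') y z
    have e1 := h1 x y z
    have e2 := h1 x' y z
    linear_combination (norm := noncomm_ring) -e + e1 * x' + x * e2
  have h3 : ∀ x y x' w, (P y * x - x * P y) * x' * (w * y - y * w) = 0 := by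
    intro x y x' w
    have e1 := h2 x (x' * w) y y
    have e2 := h2 x x' y y
    rw [← two_smul ℂ, smul_eq_zero_iff_right two_ne_zero] at e1 e2
    linear_combination (norm := noncomm_ring) e1 - e2 * w
  have h4 : ∀ x y, P y * x - x * P y = 0 ∨ ∀ w, w * y - y * w = 0 := by
    intro x y
    by_cases hx : P y * x - x * P y = 0
    · exact Or.inl hx
    · exact Or.inr fun w => (prime_mat (fun x' => h3 x y x' w)).resolve_left hx
  rcases h4 z w with hz | hw
  · exact hz
  have h5 : ∀ x' v, (P w * z - z * P w) * (x' * v - v * x') = 0 := by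
    intro x' v
    have := h2 z x' w v
    rwa [hw, mul_zero, zero_add] at this
  have h6 : ∀ x' u v, (P w * z - z * P w) * x' * (u * v - v * u) = 0 := by
    intro x' u v
    linear_combination (norm := noncomm_ring) h5 (x' * u) v - h5 x' v * u
  by_contra hne
  exact hne ((prime_mat fun x' => h6 x' (P w) z).resolve_left hne)

lemma der_inner {n : ℕ} (hn : (n : ℂ) ≠ 0) (T : Mat n →ₗ[ℂ] Mat n)
    (h : ∀ z w, T (z * w) = T z * w + z * T w) :
    ∃ a : Mat n, ∀ x, T x = a * x - x * a := by
  refine ⟨(n : ℂ)⁻¹ • ∑ p, T (eu n p) * ev n p, fun x => ?_⟩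
  have := sum_shift n T x
  simp only [h, add_mul, Finset.sum_add_distrib, mul_assoc, ← Finset.mul_sum, sum_eu_ev_one] at this
  rw [Matrix.smul_mul, Matrix.mul_smul, ← smul_sub, ← this]
  simp [smul_smul, hn]

lemma triple_form {n : ℕ} (hn : (n : ℂ) ≠ 0) (T : Mat n →ₗ[ℂ] Mat n)
    (hT : ∀ x u z, T (x * u * z + z * u * x) = T x * u * z + z * u * T x + x * (T uᴴ)ᴴ * z
      + z * (T uᴴ)ᴴ * x + x * u * T z + T z * u * x) :
    ∃ a c : Mat n, ∀ x, T x = a * x + x * c := by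
  have key : ∃ P Q : Mat n → Mat n, ∀ z w, T (z * w) = T z * w + P w * z + z * Q w := by
    refine ⟨fun w => (n : ℂ)⁻¹ • ∑ p, (T (eu n p * w) * ev n p + eu n p * w * (T (eu n p))ᴴ),
      fun w => (n : ℂ)⁻¹ • ∑ p, (ev n p * T (eu n p * w) + (T (eu n p))ᴴ * eu n p * w), ?_⟩
    intro z w
    have e := Finset.sum_congr rfl fun p (_ : p ∈ Finset.univ) => hT (eu n p * w) (ev n p) z
    have l : ∑ p, (eu n p * w * ev n p * z + z * ev n p * (eu n p * w)) =
        w.trace • z + (n : ℂ) • (z * w) := by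
      rw [Finset.sum_add_distrib, ← Finset.sum_mul, sum_eu_ev]
      have : ∀ p, z * ev n p * (eu n p * w) = z * (ev n p * eu n p) * w := by
        intro p; noncomm_ring
      simp only [this, ← Finset.sum_mul, ← Finset.mul_sum, sum_ev_eu_one]
      simp
    have r : ∑ p, (eu n p * w * ev n p * T z + T z * ev n p * (eu n p * w)) =
        w.trace • T z + (n : ℂ) • (T z * w) := by
      rw [Finset.sum_add_distrib, ← Finset.sum_mul, sum_eu_ev]
      have : ∀ p, T z * ev n p * (eu n p * w) = T z * (ev n p * eu n p) * w := by
        intro p; noncomm_ring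
      simp only [this, ← Finset.sum_mul, ← Finset.mul_sum, sum_ev_eu_one]
      simp
    rw [← map_sum, l, map_add, map_smul, map_smul] at e
    simp only [star_ev] at e
    have e2 : (n : ℂ) • T (z * w) = (n : ℂ) • (T z * w) +
       ((∑ p, (T (eu n p * w) * ev n p + eu n p * w * (T (eu n p))ᴴ)) * z +
       z * ∑ p, (ev n p * T (eu n p * w) + (T (eu n p))ᴴ * eu n p * w)) := by
      apply add_left_cancel (a := w.trace • T z)
      rw [e, ← add_assoc, ← r, Finset.sum_mul, Finset.mul_sum, ← Finset.sum_add_distrib,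
        ← Finset.sum_add_distrib]
      refine Finset.sum_congr rfl fun p _ => ?_
      noncomm_ring
    apply smul_right_injective _ hn
    simp only [smul_add, Matrix.smul_mul, Matrix.mul_smul, smul_inv_smul₀ hn]
    rw [e2]
    abel
  obtain ⟨P, Q, key⟩ := key
  let T0 : Mat n →ₗ[ℂ] Mat n := T - LinearMap.mulLeft ℂ (T 1)
  have hT0 : ∀ x, T0 x = T x - T 1 * x := fun x => rfl
  have h0 : ∀ z w, T0 (z * w) = T0 z * w + z * T0 w + (P w * z - z * P w) := by
    intro z w
    have e1 := key z w
    have e2 := key 1 w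
    rw [one_mul] at e2
    rw [hT0, hT0, hT0]
    linear_combination (norm := noncomm_ring) e1 - z * e2
  obtain ⟨h, hh⟩ := der_inner hn T0 (by
    intro z w
    rw [h0, cocycle_zero T0 P h0, add_zero])
  refine ⟨T 1 + h, -h, fun x => ?_⟩
  have := hh x
  rw [hT0] at this
  linear_combination (norm := noncomm_ring) this

lemma triple_inner {n : ℕ} (hn : (n : ℂ) ≠ 0) (T : Mat n →ₗ[ℂ] Mat n)
    (hT : ∀ x u z, T (x * u * z + z * u * x) = T x * u * z + z * u * T x + x * (T uᴴ)ᴴ * z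
      + z * (T uᴴ)ᴴ * x + x * u * T z + T z * u * x) :
    ∃ (b q : Option (Fin n × Fin n) → Mat n), ∀ x, T x =
      ∑ o, (tp (b o) (q o) x - tp x (b o) (q o)) := by
  obtain ⟨a, c, hac⟩ := triple_form hn T hT
  set t := a.trace + c.trace with ht
  set A := ∑ p, T (eu n p) * ev n p with hA
  set C := ∑ p, ev n p * T (eu n p) with hC
  have A1 : A = (n : ℂ) • a + c.trace • 1 := by
    simp only [hA, hac, add_mul, Finset.sum_add_distrib, sum_eu_ev, mul_assoc, ← Finset.mul_sum,
      sum_eu_ev_one]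
    simp only [← mul_assoc, sum_eu_ev]
    simp
  have C1 : C = a.trace • 1 + (n : ℂ) • c := by
    simp only [hC, hac, mul_add, Finset.sum_add_distrib, ← mul_assoc, sum_ev_eu, ← Finset.sum_mul,
      sum_ev_eu_one]
    simp
  have AS : ∑ p, eu n p * (T (eu n p))ᴴ = Aᴴ := by
    simp [hA, Matrix.conjTranspose_sum, Matrix.conjTranspose_mul, star_ev]
  have CS : ∑ p, (T (eu n p))ᴴ * eu n p = Cᴴ := by
    simp [hC, Matrix.conjTranspose_sum, Matrix.conjTranspose_mul, star_ev]
  have hz : ∀ z, (A + Aᴴ) * z + z * (C + Cᴴ) = 0 := by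
    intro z
    have e := Finset.sum_congr rfl fun p (_ : p ∈ Finset.univ) => hT (eu n p) (ev n p) z
    have l : ∀ z : Mat n, ∑ p, (eu n p * ev n p * z + z * ev n p * eu n p) =
        (n : ℂ) • z + (n : ℂ) • z := by
      intro z
      simp only [Finset.sum_add_distrib, ← Finset.sum_mul, sum_eu_ev_one, mul_assoc z,
        ← Finset.mul_sum, sum_ev_eu_one]
      simp
    rw [← map_sum, l, map_add, map_smul, ← l] at e
    simp only [star_ev] at e
    rw [← AS, ← CS, hA, hC, ← Finset.sum_add_distrib, ← Finset.sum_add_distrib, Finset.sum_mul,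
      Finset.mul_sum, ← Finset.sum_add_distrib]
    rw [← sub_eq_zero, ← Finset.sum_sub_distrib] at e
    rw [← neg_eq_zero, ← e, ← Finset.sum_neg_distrib]
    refine Finset.sum_congr rfl fun p _ => ?_
    noncomm_ring
  have hts : star t = -t := by
    have e := congrArg Matrix.trace (hz 1)
    have e3 : A.trace + C.trace = 2 * n * t := by
      rw [A1, C1, ht]; simp; ring
    simp only [mul_one, one_mul, Matrix.trace_add, Matrix.trace_conjTranspose, Matrix.trace_zero] at e
    have e4 := congrArg star e3
    simp only [star_add, star_mul', star_natCast, star_ofNat] at e4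
    have : 2 * (n : ℂ) * (star t + t) = 0 := by
      linear_combination e - e3 - e4
    have h2 : (2 * (n : ℂ)) ≠ 0 := by simp [hn]
    have := (mul_eq_zero.1 this).resolve_left h2
    linear_combination this
  refine ⟨fun o => o.elim 1 (eu n), fun o => o.elim (((n : ℂ)⁻¹ * 2⁻¹ * t) • 1)
    (fun p => (-(n : ℂ)⁻¹) • T (eu n p)), fun x => ?_⟩
  have s1 : ∀ p, tp (eu n p) ((-(n : ℂ)⁻¹) • T (eu n p)) x -
     tp x (eu n p) ((-(n : ℂ)⁻¹) • T (eu n p)) = ((n : ℂ)⁻¹ * 2⁻¹) • (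
      (T (eu n p) * ev n p) * x + x * (ev n p * T (eu n p)) - (eu n p * (T (eu n p))ᴴ) * x
        - x * ((T (eu n p))ᴴ * eu n p)) := by
    intro p
    simp only [tp, Matrix.star_eq_conjTranspose, Matrix.conjTranspose_smul, star_eu, star_neg,
      star_inv₀, star_natCast, Matrix.smul_mul, Matrix.mul_smul, mul_assoc]
    module
  have s2 : tp 1 (((n : ℂ)⁻¹ * 2⁻¹ * t) • (1 : Mat n)) x - tp x 1 (((n : ℂ)⁻¹ * 2⁻¹ * t) • (1 : Mat n))
     = -((n : ℂ)⁻¹ * t) • x := by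
    simp only [tp, Matrix.star_eq_conjTranspose, Matrix.conjTranspose_smul, star_mul', hts,
      star_inv₀, star_natCast, star_ofNat, Matrix.smul_mul, Matrix.mul_smul,
      Matrix.conjTranspose_one, mul_one, one_mul]
    module
  rw [Fintype.sum_option]
  simp only [Option.elim]
  simp only [s1, s2, ← Finset.smul_sum, Finset.sum_sub_distrib, Finset.sum_add_distrib,
    ← Finset.sum_mul, ← Finset.mul_sum, ← hA, ← hC, AS, CS]
  have e : A * x + x * C - Aᴴ * x - x * Cᴴ = (2 : ℂ) • (A * x + x * C) := by
    rw [two_smul]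
    linear_combination (norm := noncomm_ring) -hz x
  rw [e, A1, C1, hac]
  apply smul_right_injective _ hn
  simp only [smul_add, smul_smul, add_mul, mul_add, Matrix.smul_mul, Matrix.mul_smul, one_mul,
    mul_one, ht]
  match_scalars <;> field_simp <;> ring

def rep {n : ℕ} (φ : Module.Dual ℂ (Mat n)) : Mat n :=
  Matrix.of fun i j => star (φ (eu n (i, j)))

lemma rep_spec {n : ℕ} (φ : Module.Dual ℂ (Mat n)) (w : Mat n) :
    φ w = ((rep φ)ᴴ * w).trace := by
  conv_lhs => rw [Matrix.matrix_eq_sum_single w]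
  simp only [map_sum, rep, Matrix.trace, Matrix.diag, Matrix.mul_apply, Matrix.conjTranspose_apply,
    Matrix.of_apply, star_star]
  rw [Finset.sum_comm]
  refine Finset.sum_congr rfl fun j _ => Finset.sum_congr rfl fun i _ => ?_
  have : Matrix.single i j (w i j) = w i j • eu n (i, j) := by simp [eu]
  rw [this, map_smul, smul_eq_mul, mul_comm]

def dualOf {n : ℕ} (q : Mat n) : Module.Dual ℂ (Mat n) :=
  (Matrix.traceLinearMap (Fin n) ℂ ℂ).comp (LinearMap.mulLeft ℂ qᴴ)

lemma dualOf_apply {n : ℕ} (q w : Mat n) : dualOf q w = (qᴴ * w).trace := rfl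

lemma tOut_rep {n : ℕ} (φ : Mat n → ℂ) (q : Mat n) (h : ∀ w, φ w = (qᴴ * w).trace) (a b w : Mat n) :
    tOut a b φ w = ((tp a b q)ᴴ * w).trace := by
  simp only [tOut, h, tp, Matrix.star_eq_conjTranspose, Matrix.conjTranspose_smul,
    Matrix.conjTranspose_add, Matrix.conjTranspose_mul, Matrix.conjTranspose_conjTranspose,
    Matrix.smul_mul, Matrix.mul_smul, Matrix.trace_smul, mul_add, add_mul, Matrix.trace_add,
    star_inv₀, star_ofNat]
  congr 1
  have e : (qᴴ * (w * aᴴ * b)).trace = (aᴴ * (b * qᴴ) * w).trace := by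
    have := Matrix.trace_mul_comm (qᴴ * w) (aᴴ * b)
    simpa only [mul_assoc] using this
  rw [e]
  simp only [mul_assoc]

lemma tMid_rep {n : ℕ} (φ : Mat n → ℂ) (q : Mat n) (h : ∀ w, φ w = (qᴴ * w).trace) (a b w : Mat n) :
    tMid a φ b w = ((tp a q b)ᴴ * w).trace := by
  have h1 : tMid a φ b w = star (qᴴ * tp a w b).trace := by
    simp only [tMid, h]; rfl
  rw [h1, ← Matrix.trace_conjTranspose]
  simp only [tp, Matrix.star_eq_conjTranspose, Matrix.conjTranspose_smul,
    Matrix.conjTranspose_add, Matrix.conjTranspose_mul, Matrix.conjTranspose_conjTranspose,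
    Matrix.smul_mul, Matrix.mul_smul, Matrix.trace_smul, add_mul, Matrix.trace_add,
    star_inv₀, star_ofNat]
  have e1 := Matrix.trace_mul_comm (bᴴ * w) (aᴴ * q)
  have e2 := Matrix.trace_mul_comm (aᴴ * w) (bᴴ * q)
  simp only [mul_assoc] at e1 e2 ⊢
  rw [e1, e2, add_comm]

lemma eq_of_trace {n : ℕ} {p q : Mat n} (h : ∀ w, (pᴴ * w).trace = (qᴴ * w).trace) : p = q :=
  Matrix.conjTranspose_injective (Matrix.ext_iff_trace_mul_right.2 h)

/-- `M_n(ℂ)` is normally ternary weakly amenable: every triple derivation from `M`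
into `M*` is an inner triple derivation. -/
theorem matrix_normally_ternary_weakly_amenable (n : ℕ) (hn : 1 ≤ n)
    (δ : Mat n → Module.Dual ℂ (Mat n))
    (hadd : ∀ x y : Mat n, δ (x + y) = δ x + δ y)
    (hsmul : ∀ (c : ℂ) (x : Mat n), δ (c • x) = starRingEnd ℂ c • δ x)
    (hder : ∀ x y z : Mat n,
      ⇑(δ (tp x y z)) = tOut z y ⇑(δ x) + tMid x ⇑(δ y) z + tOut x y ⇑(δ z)) :
    ∃ (m : ℕ) (bs : Fin m → Mat n) (φs : Fin m → Module.Dual ℂ (Mat n)),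
      ∀ a : Mat n,
        ⇑(δ a) = ∑ i, (tMid (bs i) ⇑(φs i) a - tOut a (bs i) ⇑(φs i)) := by
  have hn' : (n : ℂ) ≠ 0 := by
    have : n ≠ 0 := by omega
    exact_mod_cast this
  let T : Mat n →ₗ[ℂ] Mat n :=
    { toFun := fun x => rep (δ x)
      map_add' := by
        intro x y
        ext i j
        simp [rep, hadd]
      map_smul' := by
        intro c x
        ext i j
        simp [rep, hsmul] }
  have hTs : ∀ x w, δ x w = ((T x)ᴴ * w).trace := fun x w => rep_spec (δ x) w
  have hTt : ∀ x y z, T (tp x y z) = tp z y (T x) + tp x (T y) z + tp x y (T z) := by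
    intro x y z
    apply eq_of_trace
    intro w
    rw [← hTs, hder]
    simp only [Pi.add_apply, Matrix.conjTranspose_add, add_mul, Matrix.trace_add]
    rw [tOut_rep _ _ (hTs x), tOut_rep _ _ (hTs z), tMid_rep _ _ (hTs y)]
  obtain ⟨b, q, hbq⟩ := triple_inner hn' T (by
    intro x u z
    have e := hTt x uᴴ z
    simp only [tp, Matrix.star_eq_conjTranspose, Matrix.conjTranspose_conjTranspose, map_smul,
      ← smul_add] at e
    have e' := smul_right_injective _ (inv_ne_zero (two_ne_zero (α := ℂ))) e
    rw [e']
    abel)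
  let eqv := Fintype.equivFin (Option (Fin n × Fin n))
  refine ⟨_, fun i => b (eqv.symm i), fun i => dualOf (q (eqv.symm i)), fun a => ?_⟩
  funext w
  rw [hTs, hbq, Finset.sum_apply, ← Equiv.sum_comp eqv]
  simp only [Equiv.symm_apply_apply, Pi.sub_apply, Matrix.conjTranspose_sum, Finset.sum_mul,
    Matrix.trace_sum]
  refine Finset.sum_congr rfl fun o _ => ?_
  rw [tOut_rep _ _ (dualOf_apply (q o)), tMid_rep _ _ (dualOf_apply (q o)),
    Matrix.conjTranspose_sub, sub_mul, Matrix.trace_sub]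
end
end
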